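/- Fix d ∈ ℕ, a smooth function U : ℝ^d → ℝ with ‖∇²U‖_∞ < ∞, and a constant σ > 0, and let L be the kinetic Langevin operator L h = −y·∇_x h + (∇U(x) − y/σ)·∇_y h + Δ_y h. Set β = 1/2 + (‖∇²U‖_∞ + 1 + 1/σ)², A = ∇_x + ∇_y, and Ψ(h) = |Ah|² + β h². Let μ be a probability measure on ℝ^{2d} satisfying the Poincaré inequality ∫(h − ∫h dμ)² dμ ≤ λ ∫ |∇h|² dμ for all smooth compactly supported h, for some λ > 0. Then for every smooth compactly supported h : ℝ^{2d} → ℝ, setting g = h − ∫h dμ, one has ∫ [ (1/2) L(Ψ(g)) − (Ag)·A(Lg) − β g Lg ] dμ ≥ (1/(2(2 + βλ))) ∫ Ψ(g) dμ. -/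

import Mathlib

noncomputable section

open scoped BigOperators
open MeasureTheory

open scoped BigOperators

/-- Partial derivative in the `i`-th `x`-direction of `f : ℝ^d × ℝ^d → ℝ`. -/
def pdx {d : ℕ} (i : Fin d) (f : (Fin d → ℝ) × (Fin d → ℝ) → ℝ)
    (z : (Fin d → ℝ) × (Fin d → ℝ)) : ℝ :=
  fderiv ℝ f z (Pi.single i (1 : ℝ), 0)

/-- Partial derivative in the `i`-th `y`-direction of `f : ℝ^d × ℝ^d → ℝ`. -/
def pdy {d : ℕ} (i : Fin d) (f : (Fin d → ℝ) × (Fin d → ℝ) → ℝ)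
    (z : (Fin d → ℝ) × (Fin d → ℝ)) : ℝ :=
  fderiv ℝ f z (0, Pi.single i (1 : ℝ))

/-- `i`-th component of `∇U`. -/
def gradU {d : ℕ} (U : (Fin d → ℝ) → ℝ) (i : Fin d) (x : Fin d → ℝ) : ℝ :=
  fderiv ℝ U x (Pi.single i (1 : ℝ))

/-- `(i,j)` entry of the Hessian matrix `∇²U`. -/
def hessU {d : ℕ} (U : (Fin d → ℝ) → ℝ) (i j : Fin d) (x : Fin d → ℝ) : ℝ :=
  fderiv ℝ (fun u => fderiv ℝ U u (Pi.single j (1 : ℝ))) x (Pi.single i (1 : ℝ))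

/-- The kinetic Langevin operator `L h = −y·∇ₓh + (∇U(x) − y/σ)·∇_y h + Δ_y h`. -/
def langevin {d : ℕ} (U : (Fin d → ℝ) → ℝ) (σ : ℝ)
    (f : (Fin d → ℝ) × (Fin d → ℝ) → ℝ) (z : (Fin d → ℝ) × (Fin d → ℝ)) : ℝ :=
  (∑ i, -(z.2 i) * pdx i f z)
    + (∑ i, (gradU U i z.1 - z.2 i / σ) * pdy i f z)
    + ∑ i, pdy i (fun w => pdy i f w) z

/-- The supremum over x of the Frobenius norm of the Hessian of U, i.e. ‖∇²U‖_∞. -/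
def hessNormInf {d : ℕ} (U : (Fin d → ℝ) → ℝ) : ℝ :=
  ⨆ x : Fin d → ℝ, Real.sqrt (∑ i, ∑ j, (hessU U i j x) ^ 2)

/-- β = 1/2 + (‖∇²U‖_∞ + 1 + 1/σ)². -/
def betaC {d : ℕ} (U : (Fin d → ℝ) → ℝ) (σ : ℝ) : ℝ :=
  1 / 2 + (hessNormInf U + 1 + 1 / σ) ^ 2

/-- Ψ(g) = |(∇ₓ + ∇_y)g|² + β g². -/
def PsiFn {d : ℕ} (U : (Fin d → ℝ) → ℝ) (σ : ℝ)
    (g : (Fin d → ℝ) × (Fin d → ℝ) → ℝ) (w : (Fin d → ℝ) × (Fin d → ℝ)) : ℝ :=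
  (∑ i, (pdx i g w + pdy i g w) ^ 2) + betaC U σ * (g w) ^ 2

/-- The centering g = h − ∫ h dμ. -/
def gfun {d : ℕ} (μ : Measure ((Fin d → ℝ) × (Fin d → ℝ)))
    (h : (Fin d → ℝ) × (Fin d → ℝ) → ℝ) : (Fin d → ℝ) × (Fin d → ℝ) → ℝ :=
  fun z => h z - ∫ w, h w ∂μ

/-- Directional derivative. -/
def dirD {E : Type*} [NormedAddCommGroup E] [NormedSpace ℝ E] (v : E) (f : E → ℝ) (z : E) : ℝ :=
  fderiv ℝ f z v

section dirlemmas
variable {E : Type*} [NormedAddCommGroup E] [NormedSpace ℝ E]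

lemma dirD_smooth (v : E) {f : E → ℝ} (hf : ContDiff ℝ (⊤ : ℕ∞) f) :
    ContDiff ℝ (⊤ : ℕ∞) (dirD v f) := by
  have h1 : ContDiff ℝ (⊤ : ℕ∞) (fderiv ℝ f) := hf.fderiv_right (by simp)
  exact h1.clm_apply contDiff_const

lemma smooth_diff {f : E → ℝ} (hf : ContDiff ℝ (⊤ : ℕ∞) f) (z : E) : DifferentiableAt ℝ f z :=
  (hf.differentiable (by simp)) z

lemma dirD_add (v : E) {f g : E → ℝ} (hf : ContDiff ℝ (⊤ : ℕ∞) f)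
    (hg : ContDiff ℝ (⊤ : ℕ∞) g) (z : E) :
    dirD v (fun w => f w + g w) z = dirD v f z + dirD v g z := by
  unfold dirD
  rw [fderiv_fun_add (smooth_diff hf z) (smooth_diff hg z)]; rfl

lemma dirD_mul (v : E) {f g : E → ℝ} (hf : ContDiff ℝ (⊤ : ℕ∞) f)
    (hg : ContDiff ℝ (⊤ : ℕ∞) g) (z : E) :
    dirD v (fun w => f w * g w) z = dirD v f z * g z + f z * dirD v g z := by
  unfold dirD
  rw [fderiv_fun_mul (smooth_diff hf z) (smooth_diff hg z)]; simp; ring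

lemma dirD_sum {ι : Type*} (s : Finset ι) (v : E) {f : ι → E → ℝ}
    (hf : ∀ i, ContDiff ℝ (⊤ : ℕ∞) (f i)) (z : E) :
    dirD v (fun w => ∑ i ∈ s, f i w) z = ∑ i ∈ s, dirD v (f i) z := by
  unfold dirD
  rw [fderiv_fun_sum (fun i _ => smooth_diff (hf i) z)]; simp

lemma dirD_const_mul (v : E) (c : ℝ) {f : E → ℝ} (hf : ContDiff ℝ (⊤ : ℕ∞) f) (z : E) :
    dirD v (fun w => c * f w) z = c * dirD v f z := by
  unfold dirD
  rw [fderiv_const_mul (smooth_diff hf z)]; rfl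

lemma dirD_comm (v u : E) {f : E → ℝ} (hf : ContDiff ℝ (⊤ : ℕ∞) f) (z : E) :
    dirD v (dirD u f) z = dirD u (dirD v f) z := by
  have h1 : ContDiff ℝ (⊤ : ℕ∞) (fderiv ℝ f) := hf.fderiv_right (by simp)
  have h2 : DifferentiableAt ℝ (fderiv ℝ f) z := (h1.differentiable (by simp)) z
  have key : ∀ a b : E, dirD a (dirD b f) z = fderiv ℝ (fderiv ℝ f) z a b := by
    intro a b
    unfold dirD
    rw [fderiv_clm_apply h2 (by fun_prop)]
    simp
  rw [key, key]
  have h3 : IsSymmSndFDerivAt ℝ f z :=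
    hf.contDiffAt.isSymmSndFDerivAt (by
      simp only [minSmoothness_of_isRCLikeNormedField]
      exact WithTop.coe_le_coe.2 (le_top : (2 : ℕ∞) ≤ ⊤))
  exact h3 v u

lemma dirD_add_vec (v u : E) (f : E → ℝ) (z : E) :
    dirD (v + u) f z = dirD v f z + dirD u f z := by simp [dirD]

lemma dirD_hcs (v : E) {f : E → ℝ} (hf : HasCompactSupport f) : HasCompactSupport (dirD v f) :=
  hf.fderiv_apply ℝ v

end dirlemmas

section lang
variable {d : ℕ}

def ex (i : Fin d) : (Fin d → ℝ) × (Fin d → ℝ) := (Pi.single i (1 : ℝ), 0)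
def ey (i : Fin d) : (Fin d → ℝ) × (Fin d → ℝ) := (0, Pi.single i (1 : ℝ))

lemma pdx_eq (i : Fin d) (f) : pdx i f = dirD (ex i) f := rfl
lemma pdy_eq (i : Fin d) (f) : pdy i f = dirD (ey i) f := rfl

lemma gradU_smooth {U : (Fin d → ℝ) → ℝ} (hU : ContDiff ℝ (⊤ : ℕ∞) U) (i : Fin d) :
    ContDiff ℝ (⊤ : ℕ∞) (gradU U i) := dirD_smooth _ hU

/-- the coefficient of the `y`-derivative -/
def cf (U : (Fin d → ℝ) → ℝ) (σ : ℝ) (i : Fin d) (z : (Fin d → ℝ) × (Fin d → ℝ)) : ℝ :=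
  gradU U i z.1 - z.2 i / σ

lemma cf_smooth {U : (Fin d → ℝ) → ℝ} (hU : ContDiff ℝ (⊤ : ℕ∞) U) (σ : ℝ) (i : Fin d) :
    ContDiff ℝ (⊤ : ℕ∞) (cf U σ i) := by
  have := gradU_smooth hU i
  unfold cf
  fun_prop

def cy (i : Fin d) (z : (Fin d → ℝ) × (Fin d → ℝ)) : ℝ := -(z.2 i)

lemma cy_smooth (i : Fin d) : ContDiff ℝ (⊤ : ℕ∞) (cy i) := by
  unfold cy; fun_prop

lemma dirD_cy (v : (Fin d → ℝ) × (Fin d → ℝ)) (i : Fin d) (z) : dirD v (cy i) z = -(v.2 i) := by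
  have h : HasFDerivAt (fun z : (Fin d → ℝ) × (Fin d → ℝ) => z.2 i)
      ((ContinuousLinearMap.proj i).comp (ContinuousLinearMap.snd ℝ (Fin d → ℝ) (Fin d → ℝ))) z :=
    ((ContinuousLinearMap.proj (R := ℝ) i).comp
      (ContinuousLinearMap.snd ℝ (Fin d → ℝ) (Fin d → ℝ))).hasFDerivAt
  unfold dirD cy
  rw [h.fun_neg.fderiv]
  simp

lemma dirD_cf {U : (Fin d → ℝ) → ℝ} (hU : ContDiff ℝ (⊤ : ℕ∞) U) (σ : ℝ)
    (v : (Fin d → ℝ) × (Fin d → ℝ)) (i : Fin d) (z) :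
    dirD v (cf U σ i) z = fderiv ℝ (gradU U i) z.1 v.1 - v.2 i / σ := by
  have h : HasFDerivAt (fun z : (Fin d → ℝ) × (Fin d → ℝ) => z.2 i)
      ((ContinuousLinearMap.proj i).comp (ContinuousLinearMap.snd ℝ (Fin d → ℝ) (Fin d → ℝ))) z :=
    ((ContinuousLinearMap.proj (R := ℝ) i).comp
      (ContinuousLinearMap.snd ℝ (Fin d → ℝ) (Fin d → ℝ))).hasFDerivAt
  have h2 : HasFDerivAt (fun z : (Fin d → ℝ) × (Fin d → ℝ) => gradU U i z.1) _ z :=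
    (smooth_diff (gradU_smooth hU i) z.1).hasFDerivAt.comp z hasFDerivAt_fst
  have h3 := h2.sub (h.mul_const σ⁻¹)
  unfold dirD cf
  simp only [div_eq_mul_inv]
  have h4 := h3.fderiv
  simp only [Pi.sub_def] at h4
  rw [h4]
  simp
  ring

lemma langevin_eq (U : (Fin d → ℝ) → ℝ) (σ : ℝ) (f) :
    langevin U σ f = fun z => (∑ i, cy i z * dirD (ex i) f z) + (∑ i, cf U σ i z * dirD (ey i) f z)
      + ∑ i, dirD (ey i) (dirD (ey i) f) z := rfl

lemma langevin_smooth {U : (Fin d → ℝ) → ℝ} (hU : ContDiff ℝ (⊤ : ℕ∞) U) (σ : ℝ) {f}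
    (hf : ContDiff ℝ (⊤ : ℕ∞) f) : ContDiff ℝ (⊤ : ℕ∞) (langevin U σ f) := by
  rw [langevin_eq]
  refine ((ContDiff.sum fun i _ => (cy_smooth i).mul (dirD_smooth _ hf)).add
    (ContDiff.sum fun i _ => (cf_smooth hU σ i).mul (dirD_smooth _ hf))).add
    (ContDiff.sum fun i _ => dirD_smooth _ (dirD_smooth _ hf))

lemma langevin_add (U : (Fin d → ℝ) → ℝ) (σ : ℝ) {f g}
    (hf : ContDiff ℝ (⊤ : ℕ∞) f) (hg : ContDiff ℝ (⊤ : ℕ∞) g) (z) :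
    langevin U σ (fun w => f w + g w) z = langevin U σ f z + langevin U σ g z := by
  have e : ∀ v, dirD v (fun w => f w + g w) = fun w => dirD v f w + dirD v g w :=
    fun v => funext (dirD_add v hf hg)
  simp only [langevin_eq, e, dirD_add _ (dirD_smooth _ hf) (dirD_smooth _ hg), mul_add,
    Finset.sum_add_distrib]
  ring

lemma langevin_sum (U : (Fin d → ℝ) → ℝ) (σ : ℝ) {f : Fin d → _ → ℝ}
    (hf : ∀ i, ContDiff ℝ (⊤ : ℕ∞) (f i)) (z) (s : Finset (Fin d)) :
    langevin U σ (fun w => ∑ i ∈ s, f i w) z = ∑ i ∈ s, langevin U σ (f i) z := by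
  classical
  induction s using Finset.induction_on with
  | empty =>
    have e : ∀ v, dirD v (fun _ : (Fin d → ℝ) × (Fin d → ℝ) => (0 : ℝ)) = fun _ => 0 := by
      intro v; funext w; simp [dirD]
    simp [langevin_eq, e]
  | insert a s ha ih =>
    simp only [Finset.sum_insert ha]
    rw [langevin_add U σ (hf a) (ContDiff.sum fun i _ => hf i), ih]

lemma langevin_const_mul (U : (Fin d → ℝ) → ℝ) (σ c : ℝ) {f}
    (hf : ContDiff ℝ (⊤ : ℕ∞) f) (z) :
    langevin U σ (fun w => c * f w) z = c * langevin U σ f z := by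
  have e : ∀ v, dirD v (fun w => c * f w) = fun w => c * dirD v f w :=
    fun v => funext (dirD_const_mul v c hf)
  simp only [langevin_eq, e, dirD_const_mul _ _ (dirD_smooth _ hf), mul_add, Finset.mul_sum,
    mul_left_comm]

lemma langevin_sq (U : (Fin d → ℝ) → ℝ) (σ : ℝ) {f}
    (hf : ContDiff ℝ (⊤ : ℕ∞) f) (z) :
    langevin U σ (fun w => f w ^ 2) z
      = 2 * f z * langevin U σ f z + 2 * ∑ i, dirD (ey i) f z ^ 2 := by
  have e : ∀ v, dirD v (fun w => f w ^ 2) = fun w => 2 * (f w * dirD v f w) := by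
    intro v
    funext w
    simp only [pow_two]
    rw [dirD_mul v hf hf]; ring
  have e2 : ∀ v, dirD v (fun w => 2 * (f w * dirD v f w)) z
      = 2 * (dirD v f z * dirD v f z + f z * dirD v (dirD v f) z) := by
    intro v
    rw [dirD_const_mul v 2 (hf.mul (dirD_smooth _ hf)), dirD_mul v hf (dirD_smooth _ hf)]
  simp only [langevin_eq, e, e2, mul_add, Finset.mul_sum, Finset.sum_add_distrib]
  have r1 : ∀ i, cy i z * (2 * (f z * dirD (ex i) f z)) = 2 * f z * (cy i z * dirD (ex i) f z) :=
    fun i => by ring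
  have r2 : ∀ i, cf U σ i z * (2 * (f z * dirD (ey i) f z))
      = 2 * f z * (cf U σ i z * dirD (ey i) f z) := fun i => by ring
  simp only [r1, r2, pow_two, mul_assoc]
  ring

lemma commut {U : (Fin d → ℝ) → ℝ} (hU : ContDiff ℝ (⊤ : ℕ∞) U) (σ : ℝ) {g}
    (hg : ContDiff ℝ (⊤ : ℕ∞) g) (i : Fin d) (z) :
    dirD (ex i + ey i) (langevin U σ g) z = langevin U σ (dirD (ex i + ey i) g) z
      - dirD (ex i) g z + (∑ j, hessU U i j z.1 * dirD (ey j) g z) - (1 / σ) * dirD (ey i) g z := by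
  have h1 := fun v => dirD_smooth v hg
  set v : (Fin d → ℝ) × (Fin d → ℝ) := ex i + ey i with hv
  have v1 : v.1 = Pi.single i 1 := by simp [hv, ex, ey]
  have v2 : v.2 = Pi.single i 1 := by simp [hv, ex, ey]
  have ec : ∀ u, dirD v (dirD u g) z = dirD u (dirD v g) z := fun u => dirD_comm v u hg z
  have ec2 : ∀ u, dirD v (dirD u (dirD u g)) z = dirD u (dirD u (dirD v g)) z := fun u => by
    rw [dirD_comm v u (h1 u)]
    congr 1
    funext w
    exact dirD_comm v u hg w
  rw [langevin_eq U σ g, langevin_eq U σ (dirD v g)]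
  rw [dirD_add v ((ContDiff.sum fun i _ => (cy_smooth i).mul (h1 _)).add
    (ContDiff.sum fun i _ => (cf_smooth hU σ i).mul (h1 _)))
    (ContDiff.sum fun i _ => dirD_smooth _ (h1 _)),
    dirD_add v (ContDiff.sum fun i _ => (cy_smooth i).mul (h1 _))
    (ContDiff.sum fun i _ => (cf_smooth hU σ i).mul (h1 _)),
    dirD_sum _ v (fun i => (cy_smooth i).mul (h1 _)),
    dirD_sum _ v (fun i => (cf_smooth hU σ i).mul (h1 _)),
    dirD_sum _ v (fun i => dirD_smooth _ (h1 _))]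
  simp only [dirD_mul v (cy_smooth _) (h1 _), dirD_mul v (cf_smooth hU σ _) (h1 _), ec, ec2,
    dirD_cy, dirD_cf hU, Finset.sum_add_distrib, v1, v2]
  have q1 : ∑ j, -(Pi.single i (1 : ℝ) : Fin d → ℝ) j * dirD (ex j) g z = - dirD (ex i) g z := by
    rw [Finset.sum_eq_single i] <;> simp +contextual
  have q2 : ∑ j, (fderiv ℝ (gradU U j) z.1 (Pi.single i 1)
        - (Pi.single i (1 : ℝ) : Fin d → ℝ) j / σ) * dirD (ey j) g z
      = (∑ j, hessU U i j z.1 * dirD (ey j) g z) - (1 / σ) * dirD (ey i) g z := by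
    simp only [sub_mul, Finset.sum_sub_distrib]
    congr 1
    rw [Finset.sum_eq_single i] <;> simp +contextual
  rw [q1, q2]
  ring

end lang

/-- The pointwise formula for the dissipation. -/
lemma gamma_formula {d : ℕ} {U : (Fin d → ℝ) → ℝ} (hU : ContDiff ℝ (⊤ : ℕ∞) U) (σ : ℝ) {g}
    (hg : ContDiff ℝ (⊤ : ℕ∞) g) (z) :
    (1 / 2) * langevin U σ (PsiFn U σ g) z
        - (∑ i, (pdx i g z + pdy i g z)
            * (pdx i (langevin U σ g) z + pdy i (langevin U σ g) z))
        - betaC U σ * g z * langevin U σ g z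
    = (∑ i, ∑ j, dirD (ey j) (dirD (ex i + ey i) g) z ^ 2)
      + (∑ i, dirD (ex i + ey i) g z * (dirD (ex i) g z + (1 / σ) * dirD (ey i) g z
          - ∑ j, hessU U i j z.1 * dirD (ey j) g z))
      + betaC U σ * ∑ j, dirD (ey j) g z ^ 2 := by
  have hP : PsiFn U σ g = fun w => (∑ i, dirD (ex i + ey i) g w ^ 2) + betaC U σ * g w ^ 2 := by
    funext w
    simp only [PsiFn, pdx_eq, pdy_eq, dirD_add_vec]
  have h1 : ∀ i : Fin d, ContDiff ℝ (⊤ : ℕ∞) (dirD (ex i + ey i) g) := fun i => dirD_smooth _ hg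
  rw [hP, langevin_add U σ (ContDiff.sum fun i _ => (h1 i).pow 2) (contDiff_const.mul (hg.pow 2)),
    langevin_sum U σ (fun i => (h1 i).pow 2), langevin_const_mul U σ _ (hg.pow 2),
    langevin_sq U σ hg]
  simp only [langevin_sq U σ (h1 _), pdx_eq, pdy_eq, ← dirD_add_vec, commut hU σ hg]
  have : ∀ X Y : Fin d → ℝ, ∑ i, (X i + Y i) = ∑ i, X i + ∑ i, Y i :=
    fun X Y => Finset.sum_add_distrib
  simp only [mul_add, mul_sub, Finset.sum_add_distrib, Finset.sum_sub_distrib, mul_assoc,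
    ← Finset.mul_sum]
  ring

lemma hess_bound {d : ℕ} (H : Fin d → Fin d → ℝ) (K : ℝ)
    (hK : Real.sqrt (∑ i, ∑ j, H i j ^ 2) ≤ K) (a b : Fin d → ℝ) :
    |∑ i, a i * ∑ j, H i j * b j| ≤ K * (Real.sqrt (∑ i, a i ^ 2) * Real.sqrt (∑ i, b i ^ 2)) := by
  have h1 : (∑ i, a i * ∑ j, H i j * b j) ^ 2
      ≤ (∑ i, a i ^ 2) * ((∑ i, ∑ j, H i j ^ 2) * ∑ j, b j ^ 2) := by
    refine (Finset.sum_mul_sq_le_sq_mul_sq _ _ _).trans ?_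
    refine mul_le_mul_of_nonneg_left ?_ (Finset.sum_nonneg fun i _ => sq_nonneg _)
    rw [Finset.sum_mul]
    exact Finset.sum_le_sum fun i _ => Finset.sum_mul_sq_le_sq_mul_sq _ _ _
  have hA : 0 ≤ ∑ i, a i ^ 2 := Finset.sum_nonneg fun i _ => sq_nonneg _
  have hB : 0 ≤ ∑ i, b i ^ 2 := Finset.sum_nonneg fun i _ => sq_nonneg _
  have hH : 0 ≤ ∑ i, ∑ j, H i j ^ 2 :=
    Finset.sum_nonneg fun i _ => Finset.sum_nonneg fun j _ => sq_nonneg _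
  have h2 : |∑ i, a i * ∑ j, H i j * b j| ≤ Real.sqrt (∑ i, ∑ j, H i j ^ 2)
      * (Real.sqrt (∑ i, a i ^ 2) * Real.sqrt (∑ i, b i ^ 2)) := by
    apply abs_le_of_sq_le_sq _ (by positivity)
    rw [mul_pow, mul_pow, Real.sq_sqrt hA, Real.sq_sqrt hB, Real.sq_sqrt hH]
    linarith
  exact h2.trans (mul_le_mul_of_nonneg_right hK (by positivity))

lemma dot_bound {d : ℕ} (a b : Fin d → ℝ) :
    |∑ i, a i * b i| ≤ Real.sqrt (∑ i, a i ^ 2) * Real.sqrt (∑ i, b i ^ 2) := by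
  have hA : 0 ≤ ∑ i, a i ^ 2 := Finset.sum_nonneg fun i _ => sq_nonneg _
  have hB : 0 ≤ ∑ i, b i ^ 2 := Finset.sum_nonneg fun i _ => sq_nonneg _
  apply abs_le_of_sq_le_sq _ (by positivity)
  rw [mul_pow, Real.sq_sqrt hA, Real.sq_sqrt hB]
  exact Finset.sum_mul_sq_le_sq_mul_sq _ _ _

lemma scalar_ineq (p q dot Hab K r t : ℝ) (hp : 0 ≤ p) (hq : 0 ≤ q) (hK : 0 ≤ K) (hr : 0 ≤ r)
    (ht : 0 ≤ t) (h1 : |dot| ≤ p * q) (h2 : |Hab| ≤ K * (p * q)) :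
    p ^ 2 + t * (p ^ 2 - 2 * dot + q ^ 2 + q ^ 2)
      ≤ 2 * (2 + t) * (p ^ 2 + (r - 1) * dot - Hab + (1 / 2 + (K + 1 + r) ^ 2) * q ^ 2) := by
  obtain ⟨d1, d2⟩ := abs_le.1 h1
  obtain ⟨e1, e2⟩ := abs_le.1 h2
  have hpq : 0 ≤ p * q := mul_nonneg hp hq
  have hs : (0 : ℝ) ≤ 2 + t := by linarith
  have f1 : 0 ≤ (2 + t) * (K * (p * q) - Hab) := mul_nonneg hs (by linarith)
  have f2 : 0 ≤ (2 + t) * r * (p * q + dot) := mul_nonneg (mul_nonneg hs hr) (by linarith)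
  have f4 : 0 ≤ t * (p * q) := mul_nonneg ht hpq
  have f5 : 0 ≤ (2 + t) * (p - (K + 1 + r) * q) ^ 2 := mul_nonneg hs (sq_nonneg _)
  have f6 : 0 ≤ (2 + t) * (((K + 1 + r) ^ 2 - 1) * q ^ 2) :=
    mul_nonneg hs (mul_nonneg (by nlinarith) (sq_nonneg _))
  nlinarith [sq_nonneg p, sq_nonneg q]

lemma pointwise {d : ℕ} (H : Fin d → Fin d → ℝ) (K r t : ℝ) (hr : 0 ≤ r) (ht : 0 ≤ t)
    (hK : Real.sqrt (∑ i, ∑ j, H i j ^ 2) ≤ K) (x y a : Fin d → ℝ) (ha : ∀ i, a i = x i + y i) :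
    (∑ i, a i ^ 2) + t * ((∑ i, x i ^ 2) + ∑ i, y i ^ 2)
      ≤ 2 * (2 + t) * ((∑ i, a i * (x i + r * y i - ∑ j, H i j * y j))
        + (1 / 2 + (K + 1 + r) ^ 2) * ∑ i, y i ^ 2) := by
  have hA : 0 ≤ ∑ i, a i ^ 2 := Finset.sum_nonneg fun i _ => sq_nonneg _
  have hB : 0 ≤ ∑ i, y i ^ 2 := Finset.sum_nonneg fun i _ => sq_nonneg _
  have key := scalar_ineq _ _ _ _ K r t (Real.sqrt_nonneg _) (Real.sqrt_nonneg _)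
    ((Real.sqrt_nonneg _).trans hK) hr ht (dot_bound a y) (hess_bound H K hK a y)
  rw [Real.sq_sqrt hA, Real.sq_sqrt hB] at key
  have e1 : ∑ i, x i ^ 2 = ∑ i, a i ^ 2 - 2 * ∑ i, a i * y i + ∑ i, y i ^ 2 := by
    rw [Finset.mul_sum, ← Finset.sum_sub_distrib, ← Finset.sum_add_distrib]
    exact Finset.sum_congr rfl fun i _ => by rw [ha]; ring
  have e2 : ∑ i, a i * (x i + r * y i - ∑ j, H i j * y j)
      = ∑ i, a i ^ 2 + (r - 1) * ∑ i, a i * y i - ∑ i, a i * ∑ j, H i j * y j := by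
    rw [Finset.mul_sum, ← Finset.sum_add_distrib, ← Finset.sum_sub_distrib]
    exact Finset.sum_congr rfl fun i _ => by rw [ha]; ring
  rw [e1, e2]
  exact key

lemma int_mul {d : ℕ} (μ : Measure ((Fin d → ℝ) × (Fin d → ℝ))) [IsProbabilityMeasure μ]
    {f r : (Fin d → ℝ) × (Fin d → ℝ) → ℝ} (hf : Continuous f) (hc : HasCompactSupport f)
    (hr : Continuous r) : Integrable (fun z => f z * r z) μ :=
  (hf.mul hr).integrable_of_hasCompactSupport hc.mul_right

/-- If μ is a probability measure on ℝ^{2d} satisfying a Poincaré inequality with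
constant λ, then the distorted dissipation of Ψ(g) = |Ag|² + βg² for the kinetic
Langevin operator, integrated against μ, dominates (1/(2(2+βλ))) ∫ Ψ(g) dμ, where
g = h − ∫h dμ. -/
theorem stmt8 {d : ℕ} (U : (Fin d → ℝ) → ℝ) (hU : ContDiff ℝ (⊤ : ℕ∞) U)
    (hK : BddAbove (Set.range fun x : Fin d → ℝ =>
      Real.sqrt (∑ i, ∑ j, (hessU U i j x) ^ 2)))
    (σ : ℝ) (hσ : 0 < σ)
    (μ : Measure ((Fin d → ℝ) × (Fin d → ℝ))) [IsProbabilityMeasure μ]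
    (lam : ℝ) (hlam : 0 < lam)
    (hPoincare : ∀ f : (Fin d → ℝ) × (Fin d → ℝ) → ℝ,
      ContDiff ℝ (⊤ : ℕ∞) f → HasCompactSupport f →
      ∫ z, (f z - ∫ w, f w ∂μ) ^ 2 ∂μ
        ≤ lam * ∫ z, ((∑ i, (pdx i f z) ^ 2) + ∑ i, (pdy i f z) ^ 2) ∂μ)
    (h : (Fin d → ℝ) × (Fin d → ℝ) → ℝ)
    (hh : ContDiff ℝ (⊤ : ℕ∞) h) (hhc : HasCompactSupport h) :
    ∫ z, ((1 / 2) * langevin U σ (PsiFn U σ (gfun μ h)) z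
        - (∑ i, (pdx i (gfun μ h) z + pdy i (gfun μ h) z)
            * (pdx i (langevin U σ (gfun μ h)) z
              + pdy i (langevin U σ (gfun μ h)) z))
        - betaC U σ * gfun μ h z * langevin U σ (gfun μ h) z) ∂μ
      ≥ (1 / (2 * (2 + betaC U σ * lam))) * ∫ z, PsiFn U σ (gfun μ h) z ∂μ := by
  set c := ∫ w, h w ∂μ with hc
  have hg : ContDiff ℝ (⊤ : ℕ∞) (gfun μ h) := hh.sub contDiff_const
  have hD : ∀ v, dirD v (gfun μ h) = dirD v h := by
    intro v; funext z; unfold dirD gfun; rw [fderiv_sub_const]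
  have hDs : ∀ v, ContDiff ℝ (⊤ : ℕ∞) (dirD v h) := fun v => dirD_smooth v hh
  have hDc : ∀ v, Continuous (dirD v h) := fun v => (hDs v).continuous
  have hDk : ∀ v, HasCompactSupport (dirD v h) := fun v => dirD_hcs v hhc
  have hDDc : ∀ v u, Continuous (dirD v (dirD u h)) := fun v u => (dirD_smooth v (hDs u)).continuous
  have hDDk : ∀ v u, HasCompactSupport (dirD v (dirD u h)) := fun v u => dirD_hcs v (hDk u)
  have hHc : ∀ i j, Continuous fun z : (Fin d → ℝ) × (Fin d → ℝ) => hessU U i j z.1 := fun i j =>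
    (dirD_smooth (Pi.single i (1 : ℝ)) (gradU_smooth hU j)).continuous.comp continuous_fst
  have isq : ∀ v, Integrable (fun z => dirD v h z ^ 2) μ := fun v => by
    simp only [pow_two]; exact int_mul μ (hDc v) (hDk v) (hDc v)
  have ig2 : Integrable (fun z => gfun μ h z ^ 2) μ := by
    have e : (fun z => gfun μ h z ^ 2) = fun z => h z * (h z - 2 * c) + c ^ 2 := by
      funext z; simp only [gfun]; ring
    rw [e]
    exact (int_mul μ hh.continuous hhc (by have := hh.continuous; fun_prop)).add
      (integrable_const _)
  have hβ : 0 < betaC U σ := by unfold betaC; positivity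
  simp only [gamma_formula hU σ hg, hD]
  have iΓ : Integrable (fun z => (∑ i, ∑ j, dirD (ey j) (dirD (ex i + ey i) h) z ^ 2)
      + (∑ i, dirD (ex i + ey i) h z * (dirD (ex i) h z + (1 / σ) * dirD (ey i) h z
          - ∑ j, hessU U i j z.1 * dirD (ey j) h z))
      + betaC U σ * ∑ j, dirD (ey j) h z ^ 2) μ := by
    refine ((integrable_finsetSum _ fun i _ => integrable_finsetSum _ fun j _ => ?_).add
      (integrable_finsetSum _ fun i _ => int_mul μ (hDc _) (hDk _) ?_)).add
      ((integrable_finsetSum _ fun i _ => isq _).const_mul _)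
    · simp only [pow_two]; exact int_mul μ (hDDc _ _) (hDDk _ _) (hDDc _ _)
    · exact ((hDc _).add (continuous_const.mul (hDc _))).sub
        (continuous_finsetSum _ fun j _ => (hHc i j).mul (hDc _))
  have iA : Integrable (fun z => ∑ i : Fin d, dirD (ex i + ey i) h z ^ 2) μ :=
    integrable_finsetSum _ fun i _ => isq _
  have iG : Integrable (fun z => (∑ i : Fin d, dirD (ex i) h z ^ 2)
      + ∑ i : Fin d, dirD (ey i) h z ^ 2) μ :=
    (integrable_finsetSum _ fun i _ => isq _).add (integrable_finsetSum _ fun i _ => isq _)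
  have hP : ∫ z, PsiFn U σ (gfun μ h) z ∂μ
      = (∫ z, ∑ i : Fin d, dirD (ex i + ey i) h z ^ 2 ∂μ)
        + betaC U σ * ∫ z, gfun μ h z ^ 2 ∂μ := by
    rw [← integral_const_mul, ← integral_add iA (ig2.const_mul _)]
    simp only [PsiFn, pdx_eq, pdy_eq, hD, dirD_add_vec]
  have hPo := hPoincare h hh hhc
  simp only [pdx_eq, pdy_eq] at hPo
  set t := betaC U σ * lam with ht
  have htpos : 0 < t := mul_pos hβ hlam
  have hpt : ∀ z, (∑ i : Fin d, dirD (ex i + ey i) h z ^ 2)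
      + t * ((∑ i : Fin d, dirD (ex i) h z ^ 2) + ∑ i : Fin d, dirD (ey i) h z ^ 2)
      ≤ 2 * (2 + t) * ((∑ i, ∑ j, dirD (ey j) (dirD (ex i + ey i) h) z ^ 2)
      + (∑ i, dirD (ex i + ey i) h z * (dirD (ex i) h z + (1 / σ) * dirD (ey i) h z
          - ∑ j, hessU U i j z.1 * dirD (ey j) h z))
      + betaC U σ * ∑ j, dirD (ey j) h z ^ 2) := by
    intro z
    have hKz : Real.sqrt (∑ i, ∑ j, hessU U i j z.1 ^ 2) ≤ hessNormInf U := le_ciSup hK z.1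
    have k := pointwise (fun i j => hessU U i j z.1) (hessNormInf U) (1 / σ) t (by positivity)
      htpos.le hKz (fun i => dirD (ex i) h z) (fun i => dirD (ey i) h z)
      (fun i => dirD (ex i + ey i) h z) (fun i => dirD_add_vec _ _ _ _)
    refine k.trans (mul_le_mul_of_nonneg_left ?_ (by positivity))
    have : 0 ≤ ∑ i, ∑ j, dirD (ey j) (dirD (ex i + ey i) h) z ^ 2 :=
      Finset.sum_nonneg fun i _ => Finset.sum_nonneg fun j _ => sq_nonneg _
    unfold betaC
    linarith
  have hI := integral_mono (iA.add (iG.const_mul t)) (iΓ.const_mul (2 * (2 + t))) hpt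
  simp only [Pi.add_apply] at hI
  rw [integral_add iA (iG.const_mul t), integral_const_mul, integral_const_mul] at hI
  have hPo2 : betaC U σ * ∫ z, gfun μ h z ^ 2 ∂μ ≤ t * ∫ z, ((∑ i : Fin d, dirD (ex i) h z ^ 2)
      + ∑ i : Fin d, dirD (ey i) h z ^ 2) ∂μ := by
    rw [ht, mul_assoc]
    exact mul_le_mul_of_nonneg_left hPo hβ.le
  rw [hP, ge_iff_le, one_div, inv_mul_le_iff₀ (by positivity)]
  linarith
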